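/- Let N, M, N_sc be positive integers, ρ > 0, α ∈ (0,1). Let G_n ∈ ℂ^{N×M} for n = 1,…,N_sc, and let D ∈ ℝ^{N×N} be a fixed diagonal matrix with strictly positive diagonal entries d_1,…,d_N (in the uplink OFDM model, d_j = 1 + ρ(1−α)·Σ_{ℓ=0}^{L−1} ‖f_{j,ℓ}‖² where f_{j,ℓ}ᴴ is the j-th row of the ℓ-th channel tap, and G_n = Σ_{ℓ=0}^{L−1} H_ℓ·e^{−2πi(n−1)ℓ/N_sc}). For K ⊆ {1,…,N} define the sum capacity f(K) = Σ_{n=1}^{N_sc} log₂ det( I_{|K|} + ρ·α·(D_K)⁻¹·(G_n)_K·(G_n)_Kᴴ ), where (G_n)_K is the row submatrix indexed by K and D_K the corresponding diagonal block. Then f is normalized, monotone, and submodular, and for any N_r ≤ N the greedy subset K_G of size N_r (obtained by K₀ = ∅ and K_{t+1} = K_t ∪ {argmax over j ∉ K_t of f(K_t ∪ {j})}) satisfies f(K_G) ≥ (1 − 1/e) · f(K*), where K* maximizes f over all subsets of size N_r. -/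

import Mathlib

open Matrix

/-- The row submatrix of `A` given by the rows indexed by the subset `K`. -/
noncomputable def stmt14.rowSub {N M : ℕ} (A : Matrix (Fin N) (Fin M) ℂ)
    (K : Finset (Fin N)) : Matrix K (Fin M) ℂ :=
  A.submatrix (fun i => (i : Fin N)) id

/-- The uplink wideband OFDM sum capacity
`f(K) = Σₙ log₂ det(I + ρα (D_K)⁻¹ (Gₙ)_K (Gₙ)_Kᴴ)`. -/
noncomputable def stmt14.f {N M N_sc : ℕ} (G : Fin N_sc → Matrix (Fin N) (Fin M) ℂ)
    (ρ α : ℝ) (d : Fin N → ℝ) (K : Finset (Fin N)) : ℝ :=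
  ∑ n : Fin N_sc, Real.logb 2 ((Matrix.det
    ((1 : Matrix K K ℂ) + ((ρ : ℂ) * (α : ℂ)) •
      (Matrix.diagonal (fun i : K => ((d i.1 : ℝ) : ℂ)))⁻¹ *
      (stmt14.rowSub (G n) K * (stmt14.rowSub (G n) K)ᴴ))).re)

/-!
By Sylvester's identity the capacity at one subcarrier is `log det (1 + ∑ i ∈ K, A i)`, where `A i`
is the positive semidefinite rank-one matrix contributed by antenna `i`. If `P ≤ Q` in the Loewner
order and `S = Bᴴ * B`, then `det (P + S) / det P = det (1 + B * P⁻¹ * Bᴴ)`, and passing from `P` to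
`Q` shrinks the inverse, hence this determinant: this is submodularity. For a monotone submodular
`f`, some element of a competitor `S` with `#S ≤ k` gains at least `(f S - f (K t)) / k`, so each
greedy step contracts the gap `f S - f (K t)` by the factor `1 - 1 / k`, and
`(1 - 1 / k) ^ k ≤ exp (-1)`.
-/

section SetFunction

variable {ι R : Type*} [DecidableEq ι]

/-- A set function is submodular if it has diminishing returns: the marginal gain of an element
does not increase when the set grows. -/
def IsSubmodular [Sub R] [LE R] (f : Finset ι → R) : Prop :=
  ∀ A B : Finset ι, A ⊆ B → ∀ s ∉ B, f (insert s B) - f B ≤ f (insert s A) - f A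

/-- `IsGreedyStep f A B` says that `B` arises from `A` by adding one new element of maximal
marginal gain for `f`; ties may be broken arbitrarily. -/
def IsGreedyStep [LE R] (f : Finset ι → R) (A B : Finset ι) : Prop :=
  ∃ j ∉ A, B = insert j A ∧ ∀ j' ∉ A, f (insert j' A) ≤ f (insert j A)

theorem IsGreedyStep.insert_le [Preorder R] {f : Finset ι → R} (hmono : Monotone f) {A B : Finset ι}
    (h : IsGreedyStep f A B) (s : ι) : f (insert s A) ≤ f B := by
  obtain ⟨j, -, rfl, hmax⟩ := h
  by_cases hs : s ∈ A
  · rw [Finset.insert_eq_of_mem hs]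
    exact hmono (Finset.subset_insert j A)
  · exact hmax s hs

section OrderedGroup

variable [AddCommGroup R] [PartialOrder R] [IsOrderedAddMonoid R]

theorem IsSubmodular.sum {ν : Type*} {f : ν → Finset ι → R} (t : Finset ν)
    (hf : ∀ n ∈ t, IsSubmodular (f n)) : IsSubmodular fun K => ∑ n ∈ t, f n K := by
  intro A B hAB s hs
  simp only [← Finset.sum_sub_distrib]
  exact Finset.sum_le_sum fun n hn => hf n hn A B hAB s hs

theorem IsSubmodular.union_sub_le_sum {f : Finset ι → R} (hf : IsSubmodular f) (A S : Finset ι) :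
    f (A ∪ S) - f A ≤ ∑ s ∈ S, (f (insert s A) - f A) := by
  induction S using Finset.induction_on with
  | empty => simp
  | insert s S hs ih =>
    rw [Finset.sum_insert hs, Finset.union_insert]
    have gain : f (insert s (A ∪ S)) - f (A ∪ S) ≤ f (insert s A) - f A := by
      by_cases hsA : s ∈ A
      · simp [hsA]
      · exact hf A (A ∪ S) Finset.subset_union_left s (by simp [hsA, hs])
    simpa only [sub_add_sub_cancel] using add_le_add gain ih

theorem IsGreedyStep.sub_le_card_nsmul {f : Finset ι → R} (hmono : Monotone f)
    (hsub : IsSubmodular f) {A B : Finset ι} (h : IsGreedyStep f A B) (S : Finset ι) :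
    f S - f A ≤ S.card • (f B - f A) :=
  calc f S - f A ≤ f (A ∪ S) - f A := sub_le_sub_right (hmono Finset.subset_union_right) _
    _ ≤ ∑ s ∈ S, (f (insert s A) - f A) := hsub.union_sub_le_sum A S
    _ ≤ S.card • (f B - f A) :=
      Finset.sum_le_card_nsmul _ _ _ fun s _ => sub_le_sub_right (h.insert_le hmono s) _

end OrderedGroup

variable {f : Finset ι → ℝ} {S : Finset ι}

theorem IsGreedyStep.sub_le_mul_sub (hmono : Monotone f) (hsub : IsSubmodular f)
    {A B : Finset ι} (h : IsGreedyStep f A B) {k : ℕ} (hS : S.card ≤ k) :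
    f S - f B ≤ (1 - 1 / k) * (f S - f A) := by
  have gain_nonneg : 0 ≤ f B - f A := by
    obtain ⟨j, -, rfl, -⟩ := h
    exact sub_nonneg.2 (hmono (Finset.subset_insert j A))
  have gain_ge : (f S - f A) / k ≤ f B - f A := by
    refine div_le_of_le_mul₀ k.cast_nonneg gain_nonneg ?_
    calc f S - f A ≤ S.card • (f B - f A) := h.sub_le_card_nsmul hmono hsub S
      _ ≤ k • (f B - f A) := nsmul_le_nsmul_left gain_nonneg hS
      _ = (f B - f A) * k := by rw [nsmul_eq_mul, mul_comm]
  calc f S - f B ≤ (f S - f A) - (f S - f A) / k := by linarith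
    _ = (1 - 1 / k) * (f S - f A) := by ring

theorem sub_greedy_le_pow_mul (hmono : Monotone f) (hsub : IsSubmodular f) {n k : ℕ}
    {K : ℕ → Finset ι} (hK : ∀ t < n, IsGreedyStep f (K t) (K (t + 1))) (hS : S.card ≤ k) :
    f S - f (K n) ≤ (1 - 1 / k) ^ n * (f S - f (K 0)) :=
  le_geom (u := fun t => f S - f (K t)) (Nat.one_sub_one_div_cast_nonneg k) n
    fun t ht => (hK t ht).sub_le_mul_sub hmono hsub hS

theorem one_sub_inv_exp_mul_le_greedy (hmono : Monotone f) (hsub : IsSubmodular f)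
    (h0 : 0 ≤ f ∅) {n : ℕ} {K : ℕ → Finset ι} (hK0 : K 0 = ∅)
    (hK : ∀ t < n, IsGreedyStep f (K t) (K (t + 1))) (hS : S.card ≤ n) :
    (1 - 1 / Real.exp 1) * f S ≤ f (K n) := by
  have hfS : 0 ≤ f S - f ∅ := sub_nonneg.2 (hmono S.empty_subset)
  have gap : f S - f (K n) ≤ 1 / Real.exp 1 * (f S - f ∅) := by
    rcases n.eq_zero_or_pos with rfl | hn
    · simp [hK0, Finset.card_eq_zero.1 (Nat.le_zero.1 hS)]
    · calc f S - f (K n) ≤ (1 - 1 / n) ^ n * (f S - f ∅) :=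
            hK0 ▸ sub_greedy_le_pow_mul hmono hsub hK hS
        _ ≤ Real.exp (-1) * (f S - f ∅) := by
            gcongr
            exact Real.one_sub_div_pow_le_exp_neg (Nat.one_le_cast.2 hn)
        _ = 1 / Real.exp 1 * (f S - f ∅) := by rw [Real.exp_neg, one_div]
  have h0' : 0 ≤ 1 / Real.exp 1 * f ∅ := by positivity
  linarith

end SetFunction

section Loewner

open scoped ComplexOrder MatrixOrder

variable {ι m 𝕜 : Type*} [RCLike 𝕜] {P Q S : Matrix m m 𝕜}

theorem posDef_of_le (hP : P.PosDef) (hPQ : P ≤ Q) : Q.PosDef := by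
  simpa only [add_sub_cancel] using hP.add_posSemidef (le_iff.1 hPQ)

theorem monotone_add_sum (P : Matrix m m 𝕜) {A : ι → Matrix m m 𝕜}
    (hA : ∀ i, (A i).PosSemidef) :
    Monotone fun K : Finset ι => P + ∑ i ∈ K, A i := fun _ _ h =>
  add_le_add_right (Finset.sum_le_sum_of_subset_of_nonneg h fun i _ _ => (hA i).nonneg) P

theorem posDef_add_sum {A : ι → Matrix m m 𝕜} (hP : P.PosDef)
    (hA : ∀ i, (A i).PosSemidef) (K : Finset ι) : (P + ∑ i ∈ K, A i).PosDef :=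
  hP.add_posSemidef (posSemidef_sum K fun i _ => hA i)

variable [Fintype m] [DecidableEq m]

theorem one_le_det_one_add (hS : S.PosSemidef) : 1 ≤ (1 + S).det := by
  have det_eq : (1 + S).det = ∏ i, (1 + (hS.1.eigenvalues i : 𝕜)) := by
    conv_lhs => rw [hS.1.spectral_theorem, Unitary.conjStarAlgAut_apply, Matrix.mul_assoc,
      det_one_add_mul_comm]
    simp [Matrix.mul_assoc, ← diagonal_one, diagonal_add, det_diagonal]
  rw [det_eq]
  refine Finset.one_le_prod fun i => ?_
  simpa using hS.eigenvalues_nonneg i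

theorem det_le_det_of_posSemidef (hP : P.PosSemidef) (hPQ : P ≤ Q) : P.det ≤ Q.det := by
  by_cases h0 : P.det = 0
  · rw [h0]
    exact (nonneg_iff_posSemidef.1 (hP.nonneg.trans hPQ)).det_nonneg
  have hP' : P.PosDef := hP.posDef_iff_det_ne_zero.2 h0
  obtain ⟨B, hB⟩ := CStarAlgebra.nonneg_iff_eq_star_mul_self.1 (sub_nonneg.2 hPQ)
  rw [← add_sub_cancel P Q, hB, det_add_mul _ _ hP'.det_pos.ne'.isUnit]
  exact le_mul_of_one_le_right hP'.det_pos.le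
    (one_le_det_one_add (hP'.inv.posSemidef.mul_mul_conjTranspose_same B))

-- Both `Q - P` and `P⁻¹ - Q⁻¹` are Schur complements in the block matrix `[Q, 1; 1, P⁻¹]`.
theorem inv_le_inv_of_posDef (hP : P.PosDef) (hPQ : P ≤ Q) : Q⁻¹ ≤ P⁻¹ := by
  have hQ := posDef_of_le hP hPQ
  let := hP.isUnit.invertible
  let := hQ.isUnit.invertible
  have block : (fromBlocks Q 1 1ᴴ P⁻¹).PosSemidef := by
    rw [PosDef.fromBlocks₂₂ Q 1 hP.inv]
    simpa using le_iff.1 hPQ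
  rw [PosDef.fromBlocks₁₁ 1 P⁻¹ hQ] at block
  simpa [le_iff] using block

theorem det_add_mul_det_le_of_posDef (hP : P.PosDef) (hPQ : P ≤ Q) (hS : S.PosSemidef) :
    (Q + S).det * P.det ≤ (P + S).det * Q.det := by
  have hQ := posDef_of_le hP hPQ
  obtain ⟨B, rfl⟩ := CStarAlgebra.nonneg_iff_eq_star_mul_self.1 hS.nonneg
  have hle : 1 + B * Q⁻¹ * star B ≤ 1 + B * P⁻¹ * star B :=
    add_le_add_right (star_right_conjugate_le_conjugate (inv_le_inv_of_posDef hP hPQ) B) 1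
  have hpd : (1 + B * Q⁻¹ * star B).PosDef :=
    PosDef.one.add_posSemidef (hQ.inv.posSemidef.mul_mul_conjTranspose_same B)
  rw [det_add_mul _ _ hP.det_pos.ne'.isUnit, det_add_mul _ _ hQ.det_pos.ne'.isUnit]
  calc Q.det * (1 + B * Q⁻¹ * star B).det * P.det
      = P.det * Q.det * (1 + B * Q⁻¹ * star B).det := by ring
    _ ≤ P.det * Q.det * (1 + B * P⁻¹ * star B).det :=
      mul_le_mul_of_nonneg_left (det_le_det_of_posSemidef hpd.posSemidef hle)
        (mul_nonneg hP.det_pos.le hQ.det_pos.le)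
    _ = P.det * (1 + B * P⁻¹ * star B).det * Q.det := by ring

theorem logb_det_add_sub_le_of_posDef {b : ℝ} (hb : 1 < b) (hP : P.PosDef) (hPQ : P ≤ Q)
    (hS : S.PosSemidef) :
    Real.logb b (RCLike.re (Q + S).det) - Real.logb b (RCLike.re Q.det) ≤
      Real.logb b (RCLike.re (P + S).det) - Real.logb b (RCLike.re P.det) := by
  have hQ := posDef_of_le hP hPQ
  have key := det_add_mul_det_le_of_posDef hP hPQ hS
  obtain ⟨p, hp, hp_eq⟩ := RCLike.pos_iff_exists_ofReal.1 hP.det_pos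
  obtain ⟨q, hq, hq_eq⟩ := RCLike.pos_iff_exists_ofReal.1 hQ.det_pos
  obtain ⟨p', hp', hp'_eq⟩ := RCLike.pos_iff_exists_ofReal.1 (hP.add_posSemidef hS).det_pos
  obtain ⟨q', hq', hq'_eq⟩ := RCLike.pos_iff_exists_ofReal.1 (hQ.add_posSemidef hS).det_pos
  rw [← hp_eq, ← hq_eq, ← hp'_eq, ← hq'_eq] at key ⊢
  simp only [RCLike.ofReal_re]
  rw [← Real.logb_div hq'.ne' hq.ne', ← Real.logb_div hp'.ne' hp.ne']
  refine Real.logb_le_logb_of_le hb (div_pos hq' hq) ((div_le_div_iff₀ hq hp).2 ?_)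
  exact_mod_cast key

end Loewner

section LogDet

open scoped ComplexOrder MatrixOrder

variable {ι m 𝕜 : Type*} [Fintype m] [DecidableEq m] [RCLike 𝕜]

/-- The base-`b` log-determinant of a base matrix `P` plus the contributions `A i` of the members
`i` of a set, as a set function. For positive definite `P` and positive semidefinite `A i` the
determinant is a positive real, so taking its real part loses nothing. -/
noncomputable def logDetSum (b : ℝ) (P : Matrix m m 𝕜) (A : ι → Matrix m m 𝕜) (K : Finset ι) : ℝ :=
  Real.logb b (RCLike.re (P + ∑ i ∈ K, A i).det)

variable {b : ℝ} {P : Matrix m m 𝕜} {A : ι → Matrix m m 𝕜}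

theorem logDetSum_monotone (hb : 1 < b) (hP : P.PosDef) (hA : ∀ i, (A i).PosSemidef) :
    Monotone (logDetSum b P A) := by
  intro K L hKL
  have hK := posDef_add_sum hP hA K
  exact Real.logb_le_logb_of_le hb (RCLike.pos_iff.1 hK.det_pos).1
    (RCLike.re_monotone (det_le_det_of_posSemidef hK.posSemidef (monotone_add_sum P hA hKL)))

theorem isSubmodular_logDetSum [DecidableEq ι] (hb : 1 < b) (hP : P.PosDef)
    (hA : ∀ i, (A i).PosSemidef) : IsSubmodular (logDetSum b P A) := by
  intro K L hKL s hs
  have insert_eq {T : Finset ι} (hT : s ∉ T) :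
      P + ∑ i ∈ insert s T, A i = P + ∑ i ∈ T, A i + A s := by
    rw [Finset.sum_insert hT, add_comm (A s), add_assoc]
  rw [logDetSum, logDetSum, logDetSum, logDetSum, insert_eq hs, insert_eq fun h => hs (hKL h)]
  exact logb_det_add_sub_le_of_posDef hb (posDef_add_sum hP hA K) (monotone_add_sum P hA hKL)
    (hA s)

end LogDet

theorem inv_diagonal_of_ne_zero {n F : Type*} [Fintype n] [DecidableEq n] [Field F] {v : n → F}
    (hv : ∀ i, v i ≠ 0) : (diagonal v)⁻¹ = diagonal fun i => (v i)⁻¹ := by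
  refine inv_eq_right_inv ?_
  simp [diagonal_mul_diagonal, hv]

namespace stmt14

open scoped ComplexOrder

variable {N M N_sc : ℕ}

/-- The contribution `(ρα / dᵢ) gᵢᴴ gᵢ` of antenna `i`, with channel row `gᵢ`, to the weighted
Gram matrix `(G_K)ᴴ (ρα (D_K)⁻¹) G_K`. -/
noncomputable def antennaGram (G : Matrix (Fin N) (Fin M) ℂ) (ρ α : ℝ) (d : Fin N → ℝ)
    (i : Fin N) : Matrix (Fin M) (Fin M) ℂ :=
  ((ρ * α / d i : ℝ) : ℂ) • vecMulVec (star (G i)) (G i)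

theorem posSemidef_antennaGram (G : Matrix (Fin N) (Fin M) ℂ) {ρ α : ℝ} (hρα : 0 ≤ ρ * α)
    {d : Fin N → ℝ} (hd : ∀ i, 0 ≤ d i) (i : Fin N) : (antennaGram G ρ α d i).PosSemidef :=
  (posSemidef_vecMulVec_star_self (G i)).smul
    (Complex.zero_le_real.2 (div_nonneg hρα (hd i)))

theorem sum_antennaGram (G : Matrix (Fin N) (Fin M) ℂ) (ρ α : ℝ) (d : Fin N → ℝ)
    (K : Finset (Fin N)) :
    ∑ i ∈ K, antennaGram G ρ α d i =
      (rowSub G K)ᴴ *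
        (((ρ : ℂ) * (α : ℂ)) • (diagonal fun i : K => (d i : ℂ)⁻¹) * rowSub G K) := by
  ext a b
  rw [Matrix.sum_apply, ← Finset.sum_coe_sort K, Matrix.mul_apply]
  refine Finset.sum_congr rfl fun i _ => ?_
  simp only [antennaGram, Complex.ofReal_div, Complex.ofReal_mul, Matrix.smul_apply,
    vecMulVec_apply, Pi.star_apply, smul_eq_mul, rowSub, conjTranspose_apply, submatrix_apply,
    id_eq, ← diagonal_smul, diagonal_mul, Pi.smul_apply]
  ring

theorem f_eq_sum_logDetSum (G : Fin N_sc → Matrix (Fin N) (Fin M) ℂ) (ρ α : ℝ) (d : Fin N → ℝ)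
    (hd : ∀ i, d i ≠ 0) :
    f G ρ α d = fun K => ∑ n, logDetSum 2 1 (antennaGram (G n) ρ α d) K := by
  ext K
  refine Finset.sum_congr rfl fun n _ => ?_
  rw [logDetSum, sum_antennaGram,
    inv_diagonal_of_ne_zero fun i : K => Complex.ofReal_ne_zero.2 (hd i), ← Matrix.mul_assoc,
    det_one_add_mul_comm, RCLike.re_to_complex]

theorem f_empty (G : Fin N_sc → Matrix (Fin N) (Fin M) ℂ) (ρ α : ℝ) (d : Fin N → ℝ) :
    f G ρ α d ∅ = 0 := by
  simp [f]

theorem f_monotone (G : Fin N_sc → Matrix (Fin N) (Fin M) ℂ) {ρ α : ℝ} (hρα : 0 ≤ ρ * α)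
    {d : Fin N → ℝ} (hd : ∀ i, 0 < d i) : Monotone (f G ρ α d) := by
  rw [f_eq_sum_logDetSum G ρ α d fun i => (hd i).ne']
  exact fun A B hAB => Finset.sum_le_sum fun n _ => logDetSum_monotone one_lt_two PosDef.one
    (posSemidef_antennaGram (G n) hρα fun i => (hd i).le) hAB

theorem isSubmodular_f (G : Fin N_sc → Matrix (Fin N) (Fin M) ℂ) {ρ α : ℝ} (hρα : 0 ≤ ρ * α)
    {d : Fin N → ℝ} (hd : ∀ i, 0 < d i) : IsSubmodular (f G ρ α d) := by
  rw [f_eq_sum_logDetSum G ρ α d fun i => (hd i).ne']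
  exact IsSubmodular.sum _ fun n _ => isSubmodular_logDetSum one_lt_two PosDef.one
    (posSemidef_antennaGram (G n) hρα fun i => (hd i).le)

end stmt14

theorem stmt14_general {N M N_sc : ℕ} {ρ α : ℝ} (hρα : 0 ≤ ρ * α)
    (G : Fin N_sc → Matrix (Fin N) (Fin M) ℂ) {d : Fin N → ℝ} (hd : ∀ i, 0 < d i)
    {Nr : ℕ} {K : ℕ → Finset (Fin N)} (hK0 : K 0 = ∅)
    (hgreedy : ∀ t < Nr, IsGreedyStep (stmt14.f G ρ α d) (K t) (K (t + 1)))
    {S : Finset (Fin N)} (hcard : S.card ≤ Nr) :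
    stmt14.f G ρ α d ∅ = 0 ∧ Monotone (stmt14.f G ρ α d) ∧ IsSubmodular (stmt14.f G ρ α d) ∧
      (1 - 1 / Real.exp 1) * stmt14.f G ρ α d S ≤ stmt14.f G ρ α d (K Nr) := by
  have h0 := stmt14.f_empty G ρ α d
  have hmono := stmt14.f_monotone G hρα hd
  have hsub := stmt14.isSubmodular_f G hρα hd
  exact ⟨h0, hmono, hsub, one_sub_inv_exp_mul_le_greedy hmono hsub h0.ge hK0 hgreedy hcard⟩

/-- The uplink wideband OFDM sum capacity
`f(K) = Σₙ log₂ det(I + ρα (D_K)⁻¹ (Gₙ)_K (Gₙ)_Kᴴ)`, with a fixed positive diagonal `D`, is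
normalized, monotone, and submodular, and greedy selection of `N_r` antennas achieves at least
`(1 - 1/e)` of the optimum over subsets of size `N_r`. -/
theorem stmt14 (N M N_sc : ℕ) (hNsc : 0 < N_sc) (ρ α : ℝ) (hρ : 0 < ρ)
    (hα : α ∈ Set.Ioo (0 : ℝ) 1)
    (G : Fin N_sc → Matrix (Fin N) (Fin M) ℂ)
    (d : Fin N → ℝ) (hd : ∀ i, 0 < d i)
    (Nr : ℕ) (hNr : Nr ≤ N)
    (K : ℕ → Finset (Fin N)) (hK0 : K 0 = ∅)
    (hgreedy : ∀ t < Nr, ∃ j ∉ K t, K (t + 1) = insert j (K t) ∧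
      ∀ j' ∉ K t, stmt14.f G ρ α d (insert j' (K t)) ≤ stmt14.f G ρ α d (insert j (K t)))
    (Kstar : Finset (Fin N)) (hcard : Kstar.card = Nr)
    (hopt : ∀ B : Finset (Fin N), B.card = Nr → stmt14.f G ρ α d B ≤ stmt14.f G ρ α d Kstar) :
    stmt14.f G ρ α d ∅ = 0 ∧
      (∀ A B : Finset (Fin N), A ⊆ B → stmt14.f G ρ α d A ≤ stmt14.f G ρ α d B) ∧
      (∀ A B : Finset (Fin N), A ⊆ B → ∀ s ∉ B,
        stmt14.f G ρ α d (insert s B) - stmt14.f G ρ α d B ≤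
          stmt14.f G ρ α d (insert s A) - stmt14.f G ρ α d A) ∧
      (1 - 1 / Real.exp 1) * stmt14.f G ρ α d Kstar ≤ stmt14.f G ρ α d (K Nr) := by
  have h := stmt14_general (mul_pos hρ hα.1).le G hd hK0 hgreedy hcard.le
  exact ⟨h.1, fun _ _ hAB => h.2.1 hAB, h.2.2⟩
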